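/- Let h, b, γ, p ∈ ℂ. The Virasoro module E_h(b, γ, p) is simple if and only if either (e^h ∉ {1, −1} and γ ∉ {0, 1 − p}), or (e^h = −1 and γ ∉ {0, 1 − p, (1 − p)/2}). -/

import Mathlib

/-- A representation of the Witt algebra `𝔚 = span{d_i : i ≥ -1}`, encoded by the family of
operators `d i` (only the indices `i ≥ -1` are relevant) satisfying
`[d_m, d_n] = (n - m) d_{m+n}`. -/
structure WittRep (W : Type*) [AddCommGroup W] [Module ℂ W] where
  d : ℤ → W →ₗ[ℂ] W
  comm : ∀ m n : ℤ, -1 ≤ m → -1 ≤ n →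
    d m ∘ₗ d n - d n ∘ₗ d m = (((n - m : ℤ) : ℂ)) • d (m + n)

namespace WittRep

variable {W : Type*} [AddCommGroup W] [Module ℂ W]

/-- Condition A : the module lies in the category `O_𝔚`. -/
def InO (ρ : WittRep W) : Prop :=
  ∀ v : W, ∃ n : ℕ, ∀ i : ℤ, (n : ℤ) ≤ i → ρ.d i v = 0

/-- The module is trivial: the Lie algebra acts by zero. -/
def IsTrivial (ρ : WittRep W) : Prop := ∀ i : ℤ, -1 ≤ i → ρ.d i = 0

/-- A `𝔚`-submodule. -/
def Invariant (ρ : WittRep W) (U : Submodule ℂ W) : Prop :=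
  ∀ i : ℤ, -1 ≤ i → ∀ u ∈ U, ρ.d i u ∈ U

/-- Simplicity of a `𝔚`-module. -/
def IsSimple (ρ : WittRep W) : Prop :=
  (∃ v : W, v ≠ 0) ∧ ∀ U : Submodule ℂ W, ρ.Invariant U → U = ⊥ ∨ U = ⊤

/-- A `𝔟`-submodule (`𝔟 = span{d_i : i ≥ 0}`). -/
def BInvariant (ρ : WittRep W) (U : Submodule ℂ W) : Prop :=
  ∀ i : ℤ, 0 ≤ i → ∀ u ∈ U, ρ.d i u ∈ U

/-- The socle `Soc_𝔟(W)`: the sum of the minimal nonzero `𝔟`-submodules. -/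
def Soc (ρ : WittRep W) : Submodule ℂ W :=
  sSup {U | ρ.BInvariant U ∧ U ≠ ⊥ ∧
    ∀ U' : Submodule ℂ W, ρ.BInvariant U' → U' ≠ ⊥ → U' ≤ U → U' = U}

/-- `w₀` is a highest weight vector of weight `b'`. -/
def IsHW (ρ : WittRep W) (w₀ : W) (b' : ℂ) : Prop :=
  w₀ ≠ 0 ∧ ρ.d 0 w₀ = b' • w₀ ∧ ∀ i : ℤ, 1 ≤ i → ρ.d i w₀ = 0

/-- `w₀` generates the `𝔚`-module. -/
def Generates (ρ : WittRep W) (w₀ : W) : Prop :=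
  ∀ U : Submodule ℂ W, ρ.Invariant U → w₀ ∈ U → U = ⊤

/-- The operator `e^{kt} d/dt = Σ_{i ≥ 0} (k^i/i!) d_{i-1}` (a finite sum on each vector of a
module in `O_𝔚`). -/
noncomputable def E (ρ : WittRep W) (k : ℤ) (w : W) : W :=
  ∑ᶠ i : ℕ, (((k : ℂ) ^ i) / (Nat.factorial i : ℂ)) • ρ.d ((i : ℤ) - 1) w

/-- The action of `d_k` on `L(W, λ, a, b) = W ⊗ ℂ[t, t⁻¹]`, realized on `ℤ →₀ W`
(`w ⊗ t^j ↦ Finsupp.single j w`):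
`d_k · (w ⊗ t^j) = ((λ^k e^{kt} − 1) d/dt + a + kb + j) w ⊗ t^{k+j}`. -/
noncomputable def Lact (ρ : WittRep W) (lam a b : ℂ) (k : ℤ) (f : ℤ →₀ W) : ℤ →₀ W :=
  f.sum fun j w => Finsupp.single (k + j)
    (lam ^ k • ρ.E k w - ρ.d (-1) w + (a + (k : ℂ) * b + (j : ℂ)) • w)

/-- The PBW map `ℕ →₀ ℂ → W`, `(k, c) ↦ c • d_{-1}^k w₀`. -/
noncomputable def pbwMap (ρ : WittRep W) (w₀ : W) : (ℕ →₀ ℂ) →ₗ[ℂ] W :=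
  Finsupp.lsum ℂ fun k : ℕ => ((ρ.d (-1)) ^ k) ∘ₗ LinearMap.toSpanSingleton ℂ W w₀

/-- `W` is the Verma `𝔚`-module with highest weight vector `w₀` of highest weight `b'`. -/
def IsVerma (ρ : WittRep W) (w₀ : W) (b' : ℂ) : Prop :=
  ρ.d 0 w₀ = b' • w₀ ∧ (∀ i : ℤ, 1 ≤ i → ρ.d i w₀ = 0) ∧
    Function.Bijective (ρ.pbwMap w₀)

/-- `W^{(n)} = Σ_{i=0}^n d_{-1}^i (Soc_𝔟 W)`. -/
noncomputable def Wn (ρ : WittRep W) (n : ℕ) : Submodule ℂ W :=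
  ⨆ i : Fin (n + 1), Submodule.map ((ρ.d (-1)) ^ (i : ℕ)) ρ.Soc

/-- `L₀(a, b') = span{d₁^i · (w₀ ⊗ t^{2j})} ⊆ L(W, -1, a, b' + 1)`. -/
noncomputable def Lzero (ρ : WittRep W) (a b' : ℂ) (w₀ : W) : Submodule ℂ (ℤ →₀ W) :=
  Submodule.span ℂ
    {g | ∃ (i : ℕ) (j : ℤ), g = (ρ.Lact (-1) a (b' + 1) 1)^[i] (Finsupp.single (2 * j) w₀)}

/-- `L₁(a, b') = span{d₁^i · (w₀ ⊗ t^{2j+1})} ⊆ L(W, -1, a, b' + 1)`. -/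
noncomputable def Lone (ρ : WittRep W) (a b' : ℂ) (w₀ : W) : Submodule ℂ (ℤ →₀ W) :=
  Submodule.span ℂ
    {g | ∃ (i : ℕ) (j : ℤ), g = (ρ.Lact (-1) a (b' + 1) 1)^[i] (Finsupp.single (2 * j + 1) w₀)}

end WittRep

/-- A representation of the Lie algebra `𝔟 = span{d_i : i ≥ 0}`. -/
structure BRep (B : Type*) [AddCommGroup B] [Module ℂ B] where
  d : ℕ → B →ₗ[ℂ] B
  comm : ∀ m n : ℕ, d m ∘ₗ d n - d n ∘ₗ d m = (((n : ℂ) - (m : ℂ))) • d (m + n)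

namespace BRep

variable {B : Type*} [AddCommGroup B] [Module ℂ B]

/-- Condition A : the module lies in the category `O_𝔟`. -/
def InO (ρ : BRep B) : Prop := ∀ v : B, ∃ n : ℕ, ∀ i : ℕ, n ≤ i → ρ.d i v = 0

def IsTrivial (ρ : BRep B) : Prop := ∀ i : ℕ, ρ.d i = 0

def IsSimple (ρ : BRep B) : Prop :=
  (∃ v : B, v ≠ 0) ∧
    ∀ U : Submodule ℂ B, (∀ i : ℕ, ∀ u ∈ U, ρ.d i u ∈ U) → U = ⊥ ∨ U = ⊤

/-- The set of `r ∈ ℤ≥0` such that `d_{r+i} v = 0` for all `i ≥ 1`;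
`ord_𝔟(v)` is its least element. -/
def ordSet (ρ : BRep B) (v : B) : Set ℕ := {r : ℕ | ∀ i : ℕ, r + 1 ≤ i → ρ.d i v = 0}

/-- The action of `d_m` on the Virasoro module `N(B_(c), a) = B ⊗ ℂ[t, t⁻¹]`, realized on
`ℤ →₀ B`:  `d_m · (w ⊗ t^j) = (Σ_{i≥1} (m^i/i!) d_{i-1} + mc + a + j) w ⊗ t^{m+j}`
(`c` is the twist of the `d₀`-action; `c = 0` gives `N(B, a)`). -/
noncomputable def Nact (ρ : BRep B) (a c : ℂ) (m : ℤ) (f : ℤ →₀ B) : ℤ →₀ B :=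
  f.sum fun j w => Finsupp.single (m + j)
    ((∑ᶠ i : ℕ, (((m : ℂ) ^ (i + 1)) / (Nat.factorial (i + 1) : ℂ)) • ρ.d i w) +
      ((m : ℂ) * c + a + (j : ℂ)) • w)

end BRep

/-- For a family `U : ℤ → Submodule ℂ W`, the subspace `⊕_j U j ⊗ t^j` of `W ⊗ ℂ[t,t⁻¹]`. -/
def gradedSub {W : Type*} [AddCommGroup W] [Module ℂ W] (U : ℤ → Submodule ℂ W) :
    Submodule ℂ (ℤ →₀ W) where
  carrier := {f | ∀ j, f j ∈ U j}
  add_mem' := fun hf hg j => by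
    simpa only [Finsupp.add_apply] using (U j).add_mem (hf j) (hg j)
  zero_mem' := fun j => by simp
  smul_mem' := fun c f hf j => by
    simpa only [Finsupp.smul_apply] using (U j).smul_mem c (hf j)

/-- A submodule invariant under a (ℤ-indexed) family of operators. -/
def ActInvariant {V : Type*} [AddCommGroup V] [Module ℂ V] (act : ℤ → V → V)
    (M : Submodule ℂ V) : Prop :=
  ∀ k : ℤ, ∀ u ∈ M, act k u ∈ M

/-- Simplicity of the module given by a family of operators (the central element acts by zero). -/
def ActSimple {V : Type*} [AddCommGroup V] [Module ℂ V] (act : ℤ → V → V) : Prop :=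
  (∃ v : V, v ≠ 0) ∧ ∀ M : Submodule ℂ V, ActInvariant act M → M = ⊥ ∨ M = ⊤

/-- A representation of the Virasoro algebra. -/
structure VirasoroRep (V : Type*) [AddCommGroup V] [Module ℂ V] where
  d : ℤ → V →ₗ[ℂ] V
  z : V →ₗ[ℂ] V
  comm : ∀ m n : ℤ, d m ∘ₗ d n - d n ∘ₗ d m =
    (((n - m : ℤ) : ℂ)) • d (m + n) +
      (if m + n = 0 then (((n : ℂ) ^ 3 - (n : ℂ)) / 12) else 0) • z
  comm_z : ∀ m : ℤ, d m ∘ₗ z = z ∘ₗ d m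

/-
Since `d_0` acts on degree `j` by the scalar `b + j`, every submodule is graded, and the module is
governed by its components `W → W` from one degree to another. In the cases at hand `W` is the
Verma module of highest weight `-γ`, hence a copy of `ℂ[X]` on which `d_{-1}` is multiplication by
`X`, and Taylor's formula turns `e^{kt} d/dt` into `f(X) ↦ (X - kγ) f(X - k)`.

For `f` in an invariant graded subspace, the vectors `d_{s-n} d_n f` lie in one homogeneous
component for all `n`. They are exponential polynomials in `n` with bases `1`, `λ⁻¹`, `λ`, so that
all their coefficients lie in that component too. The highest coefficient at `λ⁻ⁿ` is a constant
polynomial, a nonzero multiple of `γ (β - 1)` with `β = γ + p`; so `1` is in the subspace, and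
applying `d_1` repeatedly to it gives polynomials of all degrees. In the excluded cases there are
invariant subspaces: the constants (`λ = 1`), the multiples of `X` (`γ = 0`) or of `X - (b + j)`
(`β = 1`), and, for `λ = -1` and `β = 1 - γ`, an eigenspace of the reflection `x ↦ b + j - x`.
-/

open Polynomial

section ExponentialPolynomials

/-- The forward shift on sequences. A sequence `n ↦ μ ^ n * p n` with `p` a polynomial is a
generalized eigenvector of it, with eigenvalue `μ`. -/
def seqShift (K : Type*) [CommRing K] : Module.End K (ℕ → K) :=
  LinearMap.funLeft K K Nat.succ

theorem seqShift_sub_smul_pow_apply {K : Type*} [CommRing K] (μ : K) (D : ℕ) (g : K → K) :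
    ((seqShift K - μ • 1) ^ D) (fun n : ℕ => μ ^ n * g n) =
      fun n => μ ^ (n + D) * (fwdDiff 1)^[D] g n := by
  induction D generalizing g with
  | zero => rfl
  | succ D ih =>
    have hstep : (seqShift K - μ • 1) (fun n : ℕ => μ ^ n * g n) =
        fun n : ℕ => μ ^ n * (μ * fwdDiff 1 g n) := by
      ext n
      change μ ^ (n + 1) * g ((n + 1 : ℕ) : K) - μ * (μ ^ n * g n) =
        μ ^ n * (μ * (g (n + 1) - g n))
      rw [Nat.cast_succ]
      ring
    have hsmul : (fun x => μ * fwdDiff 1 g x) = μ • fwdDiff 1 g := rfl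
    rw [pow_succ, Module.End.mul_apply, hstep, ih (fun x => μ * fwdDiff 1 g x), hsmul,
      fwdDiff_iter_const_smul, Function.iterate_succ_apply]
    ext n
    simp only [Pi.smul_apply, smul_eq_mul]
    ring

theorem pow_mul_eval_mem_maxGenEigenspace {K : Type*} [CommRing K] (μ : K) (p : K[X]) :
    (fun n : ℕ => μ ^ n * p.eval (n : K)) ∈ (seqShift K).maxGenEigenspace μ := by
  rw [Module.End.mem_maxGenEigenspace]
  refine ⟨p.natDegree + 1, ?_⟩
  rw [seqShift_sub_smul_pow_apply μ _ p.eval, fwdDiff_iter_degree_add_one_eq_zero]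
  ext n
  exact mul_zero _

variable {K : Type*} [Field K] [CharZero K] {ι : Type*} [Fintype ι] {μ : ι → K}

theorem eq_zero_of_sum_pow_mul_eval_eq_zero (hμ : Function.Injective μ) (hμ0 : ∀ i, μ i ≠ 0)
    {p : ι → K[X]} (h : ∀ n : ℕ, ∑ i, μ i ^ n * (p i).eval (n : K) = 0) (i : ι) : p i = 0 := by
  have hind := (Module.End.independent_maxGenEigenspace (seqShift K)).comp hμ
  rw [iSupIndep_iff_finsetSum_eq_zero_imp_eq_zero] at hind
  have hzero : (fun n : ℕ => μ i ^ n * (p i).eval (n : K)) = 0 :=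
    hind Finset.univ (fun i n => μ i ^ n * (p i).eval (n : K))
      (fun i _ => pow_mul_eval_mem_maxGenEigenspace (μ i) (p i))
      (by ext n; simpa only [Finset.sum_apply, Pi.zero_apply] using h n) i (Finset.mem_univ i)
  refine eq_zero_of_infinite_isRoot _ ((Set.infinite_range_of_injective
    (Nat.cast_injective (R := K))).mono ?_)
  rintro _ ⟨n, rfl⟩
  exact (mul_eq_zero.mp (congrFun hzero n)).resolve_left (pow_ne_zero n (hμ0 i))

theorem coeff_mem_of_sum_pow_smul_eval_mem {A : Type*} [CommRing A] [Algebra K A]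
    (hμ : Function.Injective μ) (hμ0 : ∀ i, μ i ≠ 0) {G : ι → A[X]} {N : Submodule K A}
    (h : ∀ n : ℕ, ∑ i, μ i ^ n • (G i).eval (n : A) ∈ N) (i : ι) (k : ℕ) : (G i).coeff k ∈ N := by
  by_contra hk
  obtain ⟨ψ, hψ, hN⟩ := Submodule.exists_le_ker_of_notMem hk
  let p : ι → K[X] := fun i => ∑ m ∈ (G i).support, monomial m (ψ ((G i).coeff m))
  have heval (i : ι) (n : ℕ) : (p i).eval (n : K) = ψ ((G i).eval (n : A)) := by
    rw [eval_finsetSum, eval_eq_sum, Polynomial.sum, map_sum]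
    refine Finset.sum_congr rfl fun m _ => ?_
    rw [eval_monomial, ← map_natCast (algebraMap K A), ← map_pow, mul_comm, ← smul_eq_mul,
      ← map_smul, Algebra.smul_def, mul_comm]
  have hp : p i = 0 := eq_zero_of_sum_pow_mul_eval_eq_zero hμ hμ0 (fun n => by
    simpa only [heval, LinearMap.mem_ker, map_sum, map_smul, smul_eq_mul] using hN (h n)) i
  refine hψ ?_
  by_contra hne
  have hcoeff : (p i).coeff k = ψ ((G i).coeff k) := by
    rw [finsetSum_coeff]
    simp only [coeff_monomial]
    rw [Finset.sum_ite_eq', if_pos]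
    exact mem_support_iff.mpr fun h0 => hne (by rw [h0, map_zero])
  exact hne (by rw [← hcoeff, hp, coeff_zero])

end ExponentialPolynomials

open scoped Nat

section IterateDerivative

theorem iterate_derivative_natDegree {R : Type*} [Semiring R] (f : R[X]) :
    derivative^[f.natDegree] f = C (f.natDegree ! * f.leadingCoeff) := by
  rw [← factorial_smul_hasseDeriv, LinearMap.smul_apply, hasseDeriv_natDegree_eq_C, nsmul_eq_mul,
    ← C_eq_natCast, ← C_mul]

theorem comp_X_add_C_eq_sum {K : Type*} [Field K] [CharZero K] (f : K[X]) (r : K)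
    {n : ℕ} (hn : f.natDegree < n) :
    f.comp (X + C r) = ∑ i ∈ Finset.range n, (r ^ i / (i ! : K)) • derivative^[i] f := by
  refine Polynomial.funext fun x => ?_
  rw [eval_comp, eval_add, eval_X, eval_C, add_comm, ← taylor_eval,
    eval_eq_sum_range' (by rwa [natDegree_taylor]), eval_finsetSum]
  refine Finset.sum_congr rfl fun i _ => ?_
  have hi : (i ! : K) ≠ 0 := Nat.cast_ne_zero.mpr i.factorial_ne_zero
  rw [taylor_coeff, ← factorial_smul_hasseDeriv, eval_smul, LinearMap.smul_apply, eval_smul,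
    nsmul_eq_mul, smul_eq_mul]
  field_simp

theorem sum_smul_X_mul_iterate_derivative_sub {K : Type*} [Field K] [CharZero K] (f : K[X])
    (r c : K) {n : ℕ} (hn : f.natDegree + 1 < n) :
    ∑ i ∈ Finset.range n, (r ^ i / (i ! : K)) •
        (X * derivative^[i] f - ((i : K) * c) • derivative^[i - 1] f) =
      (X - C (r * c)) * f.comp (X + C r) := by
  obtain ⟨m, rfl⟩ : ∃ m, n = m + 1 := ⟨n - 1, by lia⟩
  have hlower (i : ℕ) : (r ^ (i + 1) / ((i + 1)! : K)) • (((i + 1 : ℕ) : K) * c) •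
      derivative^[i] f = (r * c) • (r ^ i / (i ! : K)) • derivative^[i] f := by
    have hi : (i ! : K) ≠ 0 := Nat.cast_ne_zero.mpr i.factorial_ne_zero
    have hi' : (i : K) + 1 ≠ 0 := Nat.cast_add_one_ne_zero i
    rw [smul_smul, smul_smul, Nat.factorial_succ]
    congr 1
    push_cast
    field_simp
    ring
  simp only [smul_sub, Finset.sum_sub_distrib, ← mul_smul_comm]
  rw [← Finset.mul_sum, ← comp_X_add_C_eq_sum f r (by lia), Finset.sum_range_succ']
  simp only [Nat.add_sub_cancel, hlower, Nat.cast_zero, zero_mul, zero_smul, smul_zero, add_zero]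
  rw [← Finset.smul_sum, ← comp_X_add_C_eq_sum f r (by lia), smul_eq_C_mul, sub_mul]

end IterateDerivative

section GradedActions

theorem exists_mem_forall_apply_eq_eval_smul {ι K V : Type*} [CommRing K] [AddCommGroup V]
    [Module K V] {D : (ι →₀ V) → ι →₀ V} {χ : ι → K} (hD : ∀ f i, D f i = χ i • f i)
    {M : Submodule K (ι →₀ V)} (hM : ∀ f ∈ M, D f ∈ M) (p : K[X]) {f : ι →₀ V} (hf : f ∈ M) :
    ∃ g ∈ M, ∀ i, g i = p.eval (χ i) • f i := by
  induction p using Polynomial.induction_on with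
  | C c => exact ⟨c • f, M.smul_mem c hf, fun i => by rw [Finsupp.smul_apply, eval_C]⟩
  | add p q hp hq =>
    obtain ⟨g, hg, hgp⟩ := hp
    obtain ⟨g', hg', hgq⟩ := hq
    exact ⟨g + g', M.add_mem hg hg', fun i => by
      rw [Finsupp.add_apply, hgp, hgq, eval_add, add_smul]⟩
  | monomial n c h =>
    obtain ⟨g, hg, hgi⟩ := h
    refine ⟨D g, hM g hg, fun i => ?_⟩
    rw [hD, hgi, smul_smul, pow_succ, ← mul_assoc, eval_mul_X, mul_comm]

theorem single_apply_mem_of_diagonal {ι K V : Type*} [Field K] [AddCommGroup V]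
    [Module K V] {D : (ι →₀ V) → ι →₀ V} {χ : ι → K} (hD : ∀ f i, D f i = χ i • f i)
    (hχ : Function.Injective χ) {M : Submodule K (ι →₀ V)} (hM : ∀ f ∈ M, D f ∈ M)
    {f : ι →₀ V} (hf : f ∈ M) (j : ι) : Finsupp.single j (f j) ∈ M := by
  classical
  by_cases hj : j ∈ f.support
  · obtain ⟨g, hg, hgi⟩ :=
      exists_mem_forall_apply_eq_eval_smul hD hM (Lagrange.basis f.support χ j) hf
    suffices hgj : g = Finsupp.single j (f j) by rwa [← hgj]
    ext i
    rw [hgi]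
    rcases eq_or_ne j i with rfl | hij
    · rw [Lagrange.eval_basis_self hχ.injOn hj, one_smul, Finsupp.single_eq_same]
    · rw [Finsupp.single_eq_of_ne hij.symm]
      by_cases hi : i ∈ f.support
      · rw [Lagrange.eval_basis_of_ne hij hi, zero_smul]
      · rw [Finsupp.notMem_support_iff.mp hi, smul_zero]
  · rw [Finsupp.notMem_support_iff.mp hj, Finsupp.single_zero]
    exact M.zero_mem

variable {V W : Type*} [AddCommGroup V] [AddCommGroup W]

/-- The operators on `W ⊗ ℂ[t, t⁻¹]`, realized as `ℤ →₀ W`, given by homogeneous components: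
the `k`-th one sends `w ⊗ t^j` to `T k j w ⊗ t^{k+j}`. -/
noncomputable def gradedAct (T : ℤ → ℤ → W → W) (k : ℤ) (f : ℤ →₀ W) : ℤ →₀ W :=
  f.sum fun j w => Finsupp.single (k + j) (T k j w)

theorem gradedAct_single {T : ℤ → ℤ → W → W} (hT : ∀ k j, T k j 0 = 0) (k j : ℤ) (w : W) :
    gradedAct T k (Finsupp.single j w) = Finsupp.single (k + j) (T k j w) := by
  rw [gradedAct, Finsupp.sum_single_index]
  rw [hT, Finsupp.single_zero]

variable [Module ℂ V] [Module ℂ W]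

theorem single_mem_gradedSub_iff {U : ℤ → Submodule ℂ W} {j : ℤ} {w : W} :
    Finsupp.single j w ∈ gradedSub U ↔ w ∈ U j := by
  refine ⟨fun h => by simpa only [Finsupp.single_eq_same] using h j, fun h i => ?_⟩
  rcases eq_or_ne i j with rfl | hij
  · rwa [Finsupp.single_eq_same]
  · rw [Finsupp.single_eq_of_ne hij]
    exact (U i).zero_mem

theorem gradedSub_eq_bot_iff {U : ℤ → Submodule ℂ W} : gradedSub U = ⊥ ↔ ∀ j, U j = ⊥ := by
  refine ⟨fun h j => (U j).eq_bot_iff.mpr fun w hw => ?_,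
    fun h => (gradedSub U).eq_bot_iff.mpr fun f hf => Finsupp.ext fun j => ?_⟩
  · rwa [← single_mem_gradedSub_iff, h, Submodule.mem_bot, Finsupp.single_eq_zero] at hw
  · exact (U j).eq_bot_iff.mp (h j) _ (hf j)

theorem gradedSub_eq_top_iff {U : ℤ → Submodule ℂ W} : gradedSub U = ⊤ ↔ ∀ j, U j = ⊤ := by
  refine ⟨fun h j => Submodule.eq_top_iff'.mpr fun w => ?_,
    fun h => Submodule.eq_top_iff'.mpr fun f j => h j ▸ Submodule.mem_top⟩
  rw [← single_mem_gradedSub_iff, h]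
  exact Submodule.mem_top

/-- A family of subspaces `U j`, one in each degree, which is stable under the components `T k j`
of a graded action. -/
def IsGradedInvariant (T : ℤ → ℤ → W → W) (U : ℤ → Submodule ℂ W) : Prop :=
  ∀ k j, ∀ w ∈ U j, T k j w ∈ U (k + j)

/-- Simplicity of the graded action with components `T k j`, in terms of homogeneous
subspaces. -/
def GradedSimple (T : ℤ → ℤ → W → W) : Prop :=
  (∃ w : W, w ≠ 0) ∧
    ∀ U : ℤ → Submodule ℂ W, IsGradedInvariant T U → (∀ j, U j = ⊥) ∨ ∀ j, U j = ⊤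

theorem IsGradedInvariant.not_gradedSimple {T : ℤ → ℤ → W → W} {U : ℤ → Submodule ℂ W}
    (hU : IsGradedInvariant T U) {i j : ℤ} (hbot : U i ≠ ⊥) (htop : U j ≠ ⊤) :
    ¬ GradedSimple T := fun h =>
  (h.2 U hU).elim (fun h => hbot (h i)) (fun h => htop (h j))

theorem GradedSimple.of_linearEquiv {S : ℤ → ℤ → V → V} {T : ℤ → ℤ → W → W} (e : V ≃ₗ[ℂ] W)
    (he : ∀ k j v, e (S k j v) = T k j (e v)) (hS : GradedSimple S) : GradedSimple T := by
  obtain ⟨⟨v, hv⟩, hsimple⟩ := hS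
  refine ⟨⟨e v, e.map_ne_zero_iff.mpr hv⟩, fun U hU => ?_⟩
  have hinv : IsGradedInvariant S fun j => (U j).comap (e : V →ₗ[ℂ] W) := fun k j v hv => by
    simpa only [Submodule.mem_comap, LinearEquiv.coe_coe, he] using hU k j _ hv
  refine (hsimple _ hinv).imp (fun h j => ?_) (fun h j => ?_)
  · rw [← Submodule.map_comap_eq_of_surjective e.surjective (U j)]
    exact (congrArg _ (h j)).trans (Submodule.map_bot _)
  · rw [← Submodule.map_comap_eq_of_surjective e.surjective (U j)]
    exact (congrArg _ (h j)).trans (Submodule.map_top _ |>.trans e.range)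

theorem gradedSimple_congr {S : ℤ → ℤ → V → V} {T : ℤ → ℤ → W → W} (e : V ≃ₗ[ℂ] W)
    (he : ∀ k j v, e (S k j v) = T k j (e v)) : GradedSimple S ↔ GradedSimple T :=
  ⟨.of_linearEquiv e he, .of_linearEquiv e.symm fun k j w => by
    rw [e.symm_apply_eq, he, e.apply_symm_apply]⟩

variable {T : ℤ → ℤ → W → W} {χ : ℤ → ℂ}

theorem actInvariant_gradedSub_iff (hT : ∀ k j, T k j 0 = 0) {U : ℤ → Submodule ℂ W} :
    ActInvariant (gradedAct T) (gradedSub U) ↔ IsGradedInvariant T U := by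
  refine ⟨fun h k j w hw => ?_, fun h k f hf => Submodule.sum_mem _ fun j _ => ?_⟩
  · rw [← single_mem_gradedSub_iff, ← gradedAct_single hT]
    exact h k _ (single_mem_gradedSub_iff.mpr hw)
  · exact single_mem_gradedSub_iff.mpr (h k j _ (hf j))

theorem gradedAct_zero_apply (hT : ∀ k j, T k j 0 = 0) (h0 : ∀ j w, T 0 j w = χ j • w)
    (f : ℤ →₀ W) (j : ℤ) : gradedAct T 0 f j = χ j • f j := by
  rw [← h0, gradedAct, Finsupp.sum_apply, Finsupp.sum, Finset.sum_eq_single j]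
  · rw [zero_add, Finsupp.single_eq_same]
  · intro i _ hij
    rw [zero_add, Finsupp.single_eq_of_ne hij.symm]
  · intro hj
    rw [Finsupp.notMem_support_iff.mp hj, hT, Finsupp.single_zero, Finsupp.zero_apply]

theorem ActInvariant.eq_gradedSub (hT : ∀ k j, T k j 0 = 0) (h0 : ∀ j w, T 0 j w = χ j • w)
    (hχ : Function.Injective χ) {M : Submodule ℂ (ℤ →₀ W)}
    (hM : ActInvariant (gradedAct T) M) :
    M = gradedSub fun j => M.comap (Finsupp.lsingle j) := by
  refine le_antisymm (fun f hf j => ?_) (fun f hf => ?_)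
  · exact single_apply_mem_of_diagonal (gradedAct_zero_apply hT h0) hχ (hM 0) hf j
  · rw [← Finsupp.sum_single f]
    exact M.sum_mem fun j _ => hf j

theorem actSimple_gradedAct_iff (hT : ∀ k j, T k j 0 = 0) (h0 : ∀ j w, T 0 j w = χ j • w)
    (hχ : Function.Injective χ) : ActSimple (gradedAct T) ↔ GradedSimple T := by
  refine and_congr ⟨fun ⟨f, hf⟩ => ?_, fun ⟨w, hw⟩ => ?_⟩ ⟨fun h U hU => ?_, fun h M hM => ?_⟩
  · obtain ⟨j, hj⟩ := Finsupp.ne_iff.mp hf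
    exact ⟨f j, hj⟩
  · exact ⟨Finsupp.single 0 w, Finsupp.single_ne_zero.mpr hw⟩
  · rw [← gradedSub_eq_bot_iff, ← gradedSub_eq_top_iff]
    exact h _ ((actInvariant_gradedSub_iff hT).mpr hU)
  · have hgr := hM.eq_gradedSub hT h0 hχ
    rw [hgr] at hM ⊢
    rw [gradedSub_eq_bot_iff, gradedSub_eq_top_iff]
    exact h _ ((actInvariant_gradedSub_iff hT).mp hM)

end GradedActions

section PolynomialModel

/-- The action of `d_k` on `L(W, λ, a, β)` from degree `j` to degree `k + j`, transported to `ℂ[X]`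
along `ℂ[X] ≃ W, f ↦ f(d_{-1}) w₀`, where `W` is the Verma module of highest weight `-γ`. -/
noncomputable def polyLact (lam a β γ : ℂ) (k j : ℤ) (f : ℂ[X]) : ℂ[X] :=
  lam ^ k • ((X - C (k * γ)) * f.comp (X - C (k : ℂ))) + (C (a + k * β + j) - X) * f

theorem polyLact_smul (lam a β γ : ℂ) (k j : ℤ) (r : ℂ) (f : ℂ[X]) :
    polyLact lam a β γ k j (r • f) = r • polyLact lam a β γ k j f := by
  rw [polyLact, polyLact, smul_comp, mul_smul_comm, mul_smul_comm, smul_add, smul_comm]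

theorem eval_polyLact (lam a β γ : ℂ) (k j : ℤ) (f : ℂ[X]) (x : ℂ) :
    (polyLact lam a β γ k j f).eval x =
      lam ^ k * ((x - k * γ) * f.eval (x - k)) + (a + k * β + j - x) * f.eval x := by
  simp only [polyLact, eval_add, eval_smul, eval_mul, eval_sub, eval_X, eval_C, eval_comp,
    smul_eq_mul]

theorem natDegree_polyLact_le (lam a β γ : ℂ) (k j : ℤ) (f : ℂ[X]) :
    (polyLact lam a β γ k j f).natDegree ≤ f.natDegree + 1 := by
  have hcomp : (f.comp (X - C (k : ℂ))).natDegree = f.natDegree := by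
    rw [natDegree_comp, natDegree_X_sub_C, mul_one]
  rw [polyLact, add_comm f.natDegree]
  exact natDegree_add_le_of_degree_le
    ((natDegree_smul_le _ _).trans
      (natDegree_mul_le_of_le (natDegree_X_sub_C _).le hcomp.le))
    (natDegree_mul_le_of_le (by compute_degree) le_rfl)

theorem coeff_natDegree_add_one_polyLact (lam a β γ : ℂ) (k j : ℤ) (f : ℂ[X]) :
    (polyLact lam a β γ k j f).coeff (f.natDegree + 1) = (lam ^ k - 1) * f.leadingCoeff := by
  have hcomp : (f.comp (X - C (k : ℂ))).natDegree = f.natDegree := by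
    rw [natDegree_comp, natDegree_X_sub_C, mul_one]
  have hlead : (f.comp (X - C (k : ℂ))).coeff f.natDegree = f.leadingCoeff := by
    rw [← hcomp, coeff_natDegree, leadingCoeff_comp (natDegree_X_sub_C (k : ℂ) ▸ one_ne_zero),
      leadingCoeff_X_sub_C, one_pow, mul_one]
  rw [polyLact, add_comm f.natDegree, coeff_add, coeff_smul,
    coeff_mul_add_eq_of_natDegree_le (natDegree_X_sub_C _).le hcomp.le,
    coeff_mul_add_eq_of_natDegree_le (by compute_degree) le_rfl, hlead, coeff_natDegree]
  simp only [coeff_sub, coeff_X_one, coeff_C_succ, smul_eq_mul]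
  ring

/-- The polynomial `u + v X`. Over `ℂ[X]` it is used for expressions in a running index `n`, which
is the outer variable. -/
noncomputable def affine {R : Type*} [Semiring R] (u v : R) : R[X] := C v * X + C u

theorem eval_affine {R : Type*} [CommSemiring R] (u v x : R) : (affine u v).eval x = v * x + u := by
  simp only [affine, eval_add, eval_mul, eval_C, eval_X]

theorem natDegree_affine_le {R : Type*} [Semiring R] (u v : R) : (affine u v).natDegree ≤ 1 :=
  natDegree_linear_le

theorem coeff_one_affine {R : Type*} [Semiring R] (u v : R) : (affine u v).coeff 1 = v := by
  rw [affine, coeff_add, coeff_C_mul, coeff_X_one, mul_one, coeff_C_succ, add_zero]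

theorem coeff_comp_affine {R : Type*} [Semiring R] (f : R[X]) (u v : R) :
    (f.comp (affine u v)).coeff f.natDegree = f.leadingCoeff * v ^ f.natDegree := by
  rcases eq_or_ne v 0 with rfl | hv
  · rw [affine, C_0, zero_mul, zero_add, comp_C, coeff_C]
    split_ifs with h
    · rw [h, pow_zero, mul_one, eq_C_of_natDegree_eq_zero h, eval_C, leadingCoeff_C]
    · rw [zero_pow h, mul_zero]
  · have hdeg : (affine u v).natDegree = 1 := natDegree_linear hv
    have hcoeff := coeff_comp_degree_mul_degree (p := f) (hdeg ▸ one_ne_zero)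
    rwa [hdeg, mul_one, affine, leadingCoeff_linear hv] at hcoeff

theorem coeff_affine_mul_affine_mul_comp_affine {R : Type*} [Semiring R] (f : R[X])
    (u v u' v' u'' v'' : R) :
    (affine u v * (affine u' v' * f.comp (affine u'' v''))).coeff (1 + (1 + f.natDegree)) =
      v * (v' * (f.leadingCoeff * v'' ^ f.natDegree)) := by
  have hcomp : (f.comp (affine u'' v'')).natDegree ≤ f.natDegree :=
    natDegree_comp_le.trans
      ((Nat.mul_le_mul_left _ (natDegree_affine_le _ _)).trans (mul_one _).le)
  rw [coeff_mul_add_eq_of_natDegree_le (natDegree_affine_le _ _)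
      (natDegree_mul_le_of_le (natDegree_affine_le _ _) hcomp),
    coeff_mul_add_eq_of_natDegree_le (natDegree_affine_le _ _) hcomp,
    coeff_one_affine, coeff_one_affine, coeff_comp_affine]

namespace polyLact

/-- The part of `d_{s-n} d_n f` that is polynomial in `n`, where `f` has degree `j` and
`c = a + j`. -/
noncomputable def compConst (lam c β γ : ℂ) (s : ℤ) (f : ℂ[X]) : ℂ[X][X] :=
  C (C (lam ^ s)) * (affine (X - C (s * γ)) (C γ) *
      (affine (X - C (s : ℂ)) (C (1 - γ)) * C (f.comp (X - C (s : ℂ))))) +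
    affine (C (c + s * β) - X) (C (1 - β)) * (affine (C c - X) (C β) * C f)

/-- The coefficient of `λ⁻ⁿ` in `d_{s-n} d_n f`, where `f` has degree `j` and `c = a + j`. -/
noncomputable def compInv (lam c β γ : ℂ) (s : ℤ) (f : ℂ[X]) : ℂ[X][X] :=
  C (C (lam ^ s)) * (affine (X - C (s * γ)) (C γ) *
    (affine (C (c + s) - X) (C (β - 1)) * (f.map C).comp (affine (X - C (s : ℂ)) 1)))

/-- The coefficient of `λⁿ` in `d_{s-n} d_n f`, where `f` has degree `j` and `c = a + j`. -/
noncomputable def compPow (c β γ : ℂ) (s : ℤ) (f : ℂ[X]) : ℂ[X][X] :=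
  affine (C (c + s * β) - X) (C (1 - β)) *
    (affine X (C (-γ)) * (f.map C).comp (affine X (-1)))

theorem coeff_compInv (lam c β γ : ℂ) (s : ℤ) (f : ℂ[X]) :
    (compInv lam c β γ s f).coeff (1 + (1 + f.natDegree)) =
      C (lam ^ s * (γ * ((β - 1) * f.leadingCoeff))) := by
  have h := coeff_affine_mul_affine_mul_comp_affine (f.map C) (X - C (s * γ)) (C γ)
    (C (c + s) - X) (C (β - 1)) (X - C (s : ℂ)) 1
  rw [natDegree_map_eq_of_injective C_injective, leadingCoeff_map_of_injective C_injective] at h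
  rw [compInv, coeff_C_mul, h, one_pow, mul_one, C_mul, C_mul, C_mul]

theorem coeff_compPow (c β γ : ℂ) (s : ℤ) (f : ℂ[X]) :
    (compPow c β γ s f).coeff (1 + (1 + f.natDegree)) =
      C ((-1) ^ f.natDegree * (γ * ((β - 1) * f.leadingCoeff))) := by
  have h := coeff_affine_mul_affine_mul_comp_affine (f.map C) (C (c + s * β) - X) (C (1 - β))
    X (C (-γ)) X (-1)
  rw [natDegree_map_eq_of_injective C_injective, leadingCoeff_map_of_injective C_injective] at h
  rw [compPow, h]
  simp only [C_mul, C_sub, C_neg, C_pow, C_1]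
  ring

theorem polyLact_polyLact {lam : ℂ} (hlam : lam ≠ 0) (a β γ : ℂ) (j s : ℤ) (f : ℂ[X]) (n : ℕ) :
    polyLact lam a β γ (s - n) (n + j) (polyLact lam a β γ n j f) =
      (compConst lam (a + j) β γ s f).eval (n : ℂ[X]) +
      lam⁻¹ ^ n • (compInv lam (a + j) β γ s f).eval (n : ℂ[X]) +
      lam ^ n • (compPow (a + j) β γ s f).eval (n : ℂ[X]) := by
  have hmap (q : ℂ[X]) : (f.map C).eval q = f.comp q := by rw [eval_map, comp]
  have hsub : lam ^ (s - (n : ℤ)) = lam ^ s * lam⁻¹ ^ n := by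
    rw [zpow_sub₀ hlam, zpow_natCast, div_eq_mul_inv, inv_pow]
  have hinv : lam ^ n * lam⁻¹ ^ n = 1 := by
    rw [← mul_pow, mul_inv_cancel₀ hlam, one_pow]
  refine Polynomial.funext fun x => ?_
  have hx₁ : x - (s - n) - n = x - (s : ℂ) := by ring
  have hx₂ : x - (s - n) = 1 * n + (x - (s : ℂ)) := by ring
  have hx₃ : x - n = -1 * (n : ℂ) + x := by ring
  simp only [eval_polyLact, compConst, compInv, compPow, eval_affine, eval_add, eval_mul, eval_C,
    eval_X, eval_sub, eval_neg, eval_one, eval_comp, eval_smul, eval_natCast, smul_eq_mul, hmap,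
    hsub, zpow_natCast]
  push_cast
  rw [hx₁, hx₂, hx₃]
  generalize eval (x - (s : ℂ)) f = A
  generalize eval (1 * n + (x - (s : ℂ))) f = B
  generalize eval (-1 * (n : ℂ) + x) f = D
  linear_combination (lam ^ s * (x - (s - n) * γ) * (x - s + n - n * γ) * A) * hinv

end polyLact

theorem one_mem_of_C_mem {K : Type*} [Field K] {N : Submodule K K[X]} {c : K} (h : C c ∈ N)
    (hc : c ≠ 0) : (1 : K[X]) ∈ N := by
  have := N.smul_mem c⁻¹ h
  rwa [smul_C, smul_eq_mul, inv_mul_cancel₀ hc, C_1] at this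

theorem injective_one_inv_self {K : Type*} [Field K] {lam : K} (hlam : lam ≠ 0) (h1 : lam ≠ 1)
    (h2 : lam ≠ -1) : Function.Injective ![1, lam⁻¹, lam] := by
  have hinv : lam⁻¹ ≠ lam := fun h => (mul_self_eq_one_iff.not.mpr (not_or.mpr ⟨h1, h2⟩))
    ((congrArg (· * lam) h).symm.trans (inv_mul_cancel₀ hlam))
  intro x y
  fin_cases x <;> fin_cases y <;> simp [h1, h1.symm, hinv, hinv.symm, eq_comm]

namespace polyLact

variable {lam a β γ : ℂ} {U : ℤ → Submodule ℂ ℂ[X]}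

theorem comp_mem (hU : IsGradedInvariant (polyLact lam a β γ) U) (hlam : lam ≠ 0) {j : ℤ}
    {f : ℂ[X]} (hf : f ∈ U j) (s : ℤ) (n : ℕ) :
    (compConst lam (a + j) β γ s f).eval (n : ℂ[X]) +
      lam⁻¹ ^ n • (compInv lam (a + j) β γ s f).eval (n : ℂ[X]) +
      lam ^ n • (compPow (a + j) β γ s f).eval (n : ℂ[X]) ∈ U (s + j) := by
  rw [← polyLact_polyLact hlam, show s + j = s - n + (n + j) by ring]
  exact hU _ _ _ (hU n j f hf)

theorem one_mem_of_ne_neg_one (hU : IsGradedInvariant (polyLact lam a β γ) U) (hlam : lam ≠ 0)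
    (h1 : lam ≠ 1) (h2 : lam ≠ -1) (hγ : γ ≠ 0) (hβ : β ≠ 1) {j : ℤ} {f : ℂ[X]} (hf : f ∈ U j)
    (hf0 : f ≠ 0) (s : ℤ) : (1 : ℂ[X]) ∈ U (s + j) := by
  have hcoeff : (compInv lam (a + j) β γ s f).coeff (1 + (1 + f.natDegree)) ∈ U (s + j) :=
    coeff_mem_of_sum_pow_smul_eval_mem (injective_one_inv_self hlam h1 h2)
      (fun i => by fin_cases i <;> simp [hlam])
      (G := ![compConst lam (a + j) β γ s f, compInv lam (a + j) β γ s f,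
        compPow (a + j) β γ s f])
      (fun n => by simpa [Fin.sum_univ_three] using comp_mem hU hlam hf s n) 1 _
  rw [coeff_compInv] at hcoeff
  exact one_mem_of_C_mem hcoeff (mul_ne_zero (zpow_ne_zero _ hlam) (mul_ne_zero hγ
    (mul_ne_zero (sub_ne_zero.mpr hβ) (leadingCoeff_ne_zero.mpr hf0))))

-- For `λ = -1` the exponentials `λ⁻ⁿ` and `λⁿ` coincide, so only the sum of their coefficients
-- is available; the two top coefficients cancel unless `s` has the parity of `deg f`.
theorem one_mem_of_even_sub (hU : IsGradedInvariant (polyLact (-1) a β γ) U) (hγ : γ ≠ 0)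
    (hβ : β ≠ 1) {j : ℤ} {f : ℂ[X]} (hf : f ∈ U j) (hf0 : f ≠ 0) {s : ℤ}
    (hs : Even (s - f.natDegree)) : (1 : ℂ[X]) ∈ U (s + j) := by
  have hne : (-1 : ℂ) ≠ 0 := neg_ne_zero.mpr one_ne_zero
  have hsign : (-1 : ℂ) ^ s = (-1) ^ f.natDegree := by
    rw [← sub_add_cancel s f.natDegree, zpow_add₀ hne, hs.neg_one_zpow, one_mul, zpow_natCast]
  have hcoeff : (compInv (-1) (a + j) β γ s f + compPow (a + j) β γ s f).coeff
      (1 + (1 + f.natDegree)) ∈ U (s + j) :=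
    coeff_mem_of_sum_pow_smul_eval_mem (μ := ![(1 : ℂ), -1])
      (by
        intro x y
        fin_cases x <;> fin_cases y <;> norm_num)
      (fun i => by fin_cases i <;> simp)
      (G := ![compConst (-1) (a + j) β γ s f,
        compInv (-1) (a + j) β γ s f + compPow (a + j) β γ s f])
      (fun n => by
        have hmem := comp_mem hU hne hf s n
        rw [inv_neg, inv_one, add_assoc (eval _ _), ← smul_add] at hmem
        simpa [Fin.sum_univ_two] using hmem) 1 _
  rw [coeff_add, coeff_compInv, coeff_compPow, hsign, ← C_add, ← two_mul] at hcoeff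
  exact one_mem_of_C_mem hcoeff (mul_ne_zero two_ne_zero (mul_ne_zero (pow_ne_zero _ hne)
    (mul_ne_zero hγ (mul_ne_zero (sub_ne_zero.mpr hβ) (leadingCoeff_ne_zero.mpr hf0)))))

theorem one_mem_of_one_mem_of_one_mem (hU : IsGradedInvariant (polyLact (-1) a β γ) U)
    (hβγ : β ≠ 1 - γ) {j : ℤ} (h1 : (1 : ℂ[X]) ∈ U (j - 1)) (h3 : (1 : ℂ[X]) ∈ U (j - 3)) :
    (1 : ℂ[X]) ∈ U j := by
  have hmem₁ := hU 1 _ _ h1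
  have hmem₃ := hU 3 _ _ h3
  rw [add_sub_cancel] at hmem₁ hmem₃
  have hsub : polyLact (-1) a β γ 3 (j - 3) 1 - polyLact (-1) a β γ 1 (j - 1) 1 =
      C (2 * (β - (1 - γ))) := by
    refine Polynomial.funext fun x => ?_
    rw [eval_sub, eval_polyLact, eval_polyLact, eval_C, Odd.neg_one_zpow (by decide), zpow_one]
    simp only [eval_one]
    push_cast
    ring
  exact one_mem_of_C_mem (hsub ▸ (U j).sub_mem hmem₃ hmem₁)
    (mul_ne_zero two_ne_zero (sub_ne_zero.mpr hβγ))

theorem one_mem_of_eq_neg_one (hU : IsGradedInvariant (polyLact (-1) a β γ) U) (hγ : γ ≠ 0)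
    (hβ : β ≠ 1) (hβγ : β ≠ 1 - γ) {j : ℤ} {f : ℂ[X]} (hf : f ∈ U j) (hf0 : f ≠ 0) (i : ℤ) :
    (1 : ℂ[X]) ∈ U i := by
  have heven {i : ℤ} (hi : Even (i - j - f.natDegree)) : (1 : ℂ[X]) ∈ U i := by
    simpa only [sub_add_cancel] using one_mem_of_even_sub hU hγ hβ hf hf0 hi
  by_cases hi : Even (i - j - f.natDegree)
  · exact heven hi
  · exact one_mem_of_one_mem_of_one_mem hU hβγ (heven (by grind)) (heven (by grind))

theorem exists_mem_degree_eq (hU : IsGradedInvariant (polyLact lam a β γ) U) (h1 : lam ≠ 1)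
    (hone : ∀ j, (1 : ℂ[X]) ∈ U j) (D : ℕ) (j : ℤ) : ∃ f ∈ U j, f.degree = D := by
  induction D generalizing j with
  | zero => exact ⟨1, hone j, degree_one⟩
  | succ D ih =>
    obtain ⟨f, hf, hdeg⟩ := ih (j - 1)
    have hmem := hU 1 _ f hf
    rw [add_sub_cancel] at hmem
    have hnat : f.natDegree = D := natDegree_eq_of_degree_eq_some hdeg
    have hf0 : f ≠ 0 := by
      rintro rfl
      exact WithBot.bot_ne_natCast D (degree_zero.symm.trans hdeg)
    refine ⟨_, hmem, degree_eq_of_le_of_coeff_ne_zero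
      (degree_le_of_natDegree_le (hnat ▸ natDegree_polyLact_le ..)) ?_⟩
    rw [← hnat, coeff_natDegree_add_one_polyLact, zpow_one]
    exact mul_ne_zero (sub_ne_zero.mpr h1) (leadingCoeff_ne_zero.mpr hf0)

theorem eq_top_of_one_mem (hU : IsGradedInvariant (polyLact lam a β γ) U) (h1 : lam ≠ 1)
    (hone : ∀ j, (1 : ℂ[X]) ∈ U j) (j : ℤ) : U j = ⊤ := by
  choose f hf hdeg using fun D => exists_mem_degree_eq hU h1 hone D j
  let S : Polynomial.Sequence ℂ := ⟨f, hdeg⟩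
  rw [eq_top_iff, ← S.span fun i => (leadingCoeff_ne_zero.mpr (S.ne_zero i)).isUnit,
    Submodule.span_le]
  rintro _ ⟨D, rfl⟩
  exact hf D

theorem eq_bot_or_eq_top (hU : IsGradedInvariant (polyLact lam a β γ) U) (hlam : lam ≠ 0)
    (h1 : lam ≠ 1) (hγ : γ ≠ 0) (hβ : β ≠ 1) (hneg : lam = -1 → β ≠ 1 - γ) :
    (∀ j, U j = ⊥) ∨ ∀ j, U j = ⊤ := by
  refine or_iff_not_imp_left.mpr fun hbot => eq_top_of_one_mem hU h1 fun i => ?_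
  obtain ⟨j, hj⟩ := not_forall.mp hbot
  obtain ⟨f, hf, hf0⟩ := (U j).ne_bot_iff.mp hj
  rcases eq_or_ne lam (-1) with rfl | h2
  · exact one_mem_of_eq_neg_one hU hγ hβ (hneg rfl) hf hf0 i
  · simpa only [sub_add_cancel] using
      one_mem_of_ne_neg_one hU hlam h1 h2 hγ hβ hf hf0 (i - j)

end polyLact

theorem ker_leval_ne_bot {R : Type*} [Ring R] [Nontrivial R] (r : R) :
    LinearMap.ker (leval r) ≠ ⊥ :=
  (Submodule.ne_bot_iff _).mpr ⟨X - C r, by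
    rw [LinearMap.mem_ker, leval_apply, eval_sub, eval_X, eval_C, sub_self], X_sub_C_ne_zero r⟩

theorem ker_leval_ne_top {R : Type*} [Ring R] [Nontrivial R] (r : R) :
    LinearMap.ker (leval r) ≠ ⊤ := fun h =>
  one_ne_zero (α := R) (by
    rw [← eval_one (x := r), ← leval_apply, ← LinearMap.mem_ker, h]
    exact Submodule.mem_top)

/-- The polynomials `f` with `f (c - x) = μ f (x)`. -/
noncomputable def reflectionEigenspace (c μ : ℂ) : Submodule ℂ ℂ[X] :=
  Module.End.eigenspace (aeval (C c - X : ℂ[X])).toLinearMap μ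

theorem mem_reflectionEigenspace_iff {c μ : ℂ} {f : ℂ[X]} :
    f ∈ reflectionEigenspace c μ ↔ f.comp (C c - X) = μ • f :=
  Module.End.mem_eigenspace_iff

namespace polyLact

theorem not_gradedSimple_lam_one (a β γ : ℂ) : ¬ GradedSimple (polyLact 1 a β γ) := by
  have hinv : IsGradedInvariant (polyLact 1 a β γ) fun _ => 1 := fun k j f hf => by
    obtain ⟨c, rfl⟩ := Submodule.mem_one.mp hf
    refine Submodule.mem_one.mpr ⟨c * (a + k * β + j - k * γ), Polynomial.funext fun x => ?_⟩
    rw [eval_polyLact]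
    simp only [algebraMap_eq, eval_C, one_zpow]
    ring
  refine hinv.not_gradedSimple (i := 0) (j := 0) one_ne_zero fun h => ?_
  obtain ⟨c, hc⟩ := Submodule.mem_one.mp (h ▸ Submodule.mem_top (x := (X : ℂ[X])))
  exact X_ne_C c hc.symm

theorem not_gradedSimple_gamma_zero (lam a β : ℂ) :
    ¬ GradedSimple (polyLact lam a β 0) := by
  have hinv : IsGradedInvariant (polyLact lam a β 0) fun _ => LinearMap.ker (leval 0) :=
    fun k j f hf => by
      rw [LinearMap.mem_ker, leval_apply] at hf ⊢
      rw [eval_polyLact, hf]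
      ring
  exact hinv.not_gradedSimple (i := 0) (j := 0) (ker_leval_ne_bot 0) (ker_leval_ne_top 0)

theorem not_gradedSimple_beta_one (lam a γ : ℂ) : ¬ GradedSimple (polyLact lam a 1 γ) := by
  have hinv : IsGradedInvariant (polyLact lam a 1 γ) fun j => LinearMap.ker (leval (a + j)) :=
    fun k j f hf => by
      rw [LinearMap.mem_ker, leval_apply] at hf ⊢
      rw [eval_polyLact, Int.cast_add, show a + (k + j) - (k : ℂ) = a + j by ring, hf]
      ring
  exact hinv.not_gradedSimple (i := 0) (j := 0) (ker_leval_ne_bot _) (ker_leval_ne_top _)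

theorem comp_reflection {lam : ℂ} (hlam : lam ≠ 0) (a β γ : ℂ) (k j : ℤ) (f : ℂ[X]) :
    (polyLact lam a β γ k j f).comp (C (a + (k + j : ℤ)) - X) =
      lam ^ k • polyLact lam⁻¹ a (1 - γ) (1 - β) k j (f.comp (C (a + j) - X)) := by
  refine Polynomial.funext fun x => ?_
  have hinv : lam ^ k * lam⁻¹ ^ k = 1 := by
    rw [← mul_zpow, mul_inv_cancel₀ hlam, one_zpow]
  have hx₁ : a + (k + j) - x - k = a + j - x := by ring
  have hx₂ : a + (k + j) - x = a + j - (x - k) := by ring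
  simp only [eval_comp, eval_polyLact, eval_smul, eval_sub, eval_C, eval_X, smul_eq_mul,
    Int.cast_add, hx₁]
  rw [hx₂]
  linear_combination (-((x - k * (1 - β)) * f.eval (a + j - (x - k)))) * hinv

theorem isGradedInvariant_reflectionEigenspace (a γ : ℂ) :
    IsGradedInvariant (polyLact (-1) a (1 - γ) γ)
      fun j => reflectionEigenspace (a + j) ((-1) ^ j) := fun k j f hf => by
  have hne : (-1 : ℂ) ≠ 0 := neg_ne_zero.mpr one_ne_zero
  rw [mem_reflectionEigenspace_iff] at hf ⊢
  rw [comp_reflection hne, hf, polyLact_smul, smul_smul, ← zpow_add₀ hne, inv_neg, inv_one,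
    sub_sub_cancel]

theorem not_gradedSimple_lam_neg_one (a γ : ℂ) :
    ¬ GradedSimple (polyLact (-1) a (1 - γ) γ) := by
  refine (isGradedInvariant_reflectionEigenspace a γ).not_gradedSimple (i := 0) (j := 0)
    ((Submodule.ne_bot_iff _).mpr ⟨1, ?_, one_ne_zero⟩) fun htop => ?_
  · rw [mem_reflectionEigenspace_iff, one_comp, zpow_zero, one_smul]
  · have hmem := htop ▸ Submodule.mem_top (x := (X - C (a / 2) : ℂ[X]))
    rw [mem_reflectionEigenspace_iff] at hmem
    have heval := congrArg (eval (a / 2 + 1)) hmem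
    simp only [eval_comp, eval_sub, eval_X, eval_C, Int.cast_zero, zpow_zero, one_smul]
      at heval
    have : (2 : ℂ) = 0 := by linear_combination -heval
    exact two_ne_zero this

end polyLact

theorem gradedSimple_polyLact_iff {lam : ℂ} (hlam : lam ≠ 0) (a β γ : ℂ) :
    GradedSimple (polyLact lam a β γ) ↔
      lam ≠ 1 ∧ γ ≠ 0 ∧ β ≠ 1 ∧ (lam = -1 → β ≠ 1 - γ) := by
  refine ⟨fun h => ⟨?_, ?_, ?_, ?_⟩, fun ⟨h1, hγ, hβ, hneg⟩ =>
    ⟨⟨1, one_ne_zero⟩, fun U hU => polyLact.eq_bot_or_eq_top hU hlam h1 hγ hβ hneg⟩⟩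
  · rintro rfl
    exact polyLact.not_gradedSimple_lam_one a β γ h
  · rintro rfl
    exact polyLact.not_gradedSimple_gamma_zero lam a β h
  · rintro rfl
    exact polyLact.not_gradedSimple_beta_one lam a γ h
  · rintro rfl rfl
    exact polyLact.not_gradedSimple_lam_neg_one a γ h

end PolynomialModel

namespace WittRep

variable {W : Type*} [AddCommGroup W] [Module ℂ W] (ρ : WittRep W)

/-- The `ℂ[d_{-1}]`-linear map `ℂ[X] → W`, `f ↦ f(d_{-1}) w₀`; it identifies `ℂ[X]` with `W` when
`W` is the Verma module generated by `w₀`. -/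
noncomputable def ofPoly (w₀ : W) : ℂ[X] →ₗ[ℂ] W :=
  LinearMap.applyₗ w₀ ∘ₗ (aeval (ρ.d (-1))).toLinearMap

theorem ofPoly_apply (w₀ : W) (f : ℂ[X]) : ρ.ofPoly w₀ f = aeval (ρ.d (-1)) f w₀ :=
  rfl

theorem ofPoly_one (w₀ : W) : ρ.ofPoly w₀ 1 = w₀ := by
  rw [ofPoly_apply, map_one, Module.End.one_apply]

theorem ofPoly_X_mul (w₀ : W) (f : ℂ[X]) : ρ.ofPoly w₀ (X * f) = ρ.d (-1) (ρ.ofPoly w₀ f) := by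
  rw [ofPoly_apply, map_mul, aeval_X, Module.End.mul_apply, ofPoly_apply]

theorem ofPoly_eq_pbwMap_comp (w₀ : W) :
    ρ.ofPoly w₀ = ρ.pbwMap w₀ ∘ₗ (basisMonomials ℂ).repr.toLinearMap := by
  refine (basisMonomials ℂ).ext fun k => ?_
  rw [LinearMap.comp_apply, LinearEquiv.coe_coe, Module.Basis.repr_self]
  simp [pbwMap, ofPoly_apply, coe_basisMonomials, aeval_monomial]

theorem bijective_ofPoly_iff {w₀ : W} :
    Function.Bijective (ρ.ofPoly w₀) ↔ Function.Bijective (ρ.pbwMap w₀) := by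
  rw [ofPoly_eq_pbwMap_comp, LinearMap.coe_comp]
  exact Function.Bijective.of_comp_iff _ (basisMonomials ℂ).repr.bijective

theorem d_d_neg_one {i : ℤ} (hi : -1 ≤ i) (w : W) :
    ρ.d i (ρ.d (-1) w) = ρ.d (-1) (ρ.d i w) - ((i : ℂ) + 1) • ρ.d (i - 1) w := by
  have hcomm := LinearMap.congr_fun (ρ.comm i (-1) hi le_rfl) w
  simp only [LinearMap.sub_apply, LinearMap.comp_apply, LinearMap.smul_apply] at hcomm
  rw [sub_eq_iff_eq_add.mp hcomm, ← sub_eq_add_neg i 1]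
  push_cast
  module

theorem E_zero_right (k : ℤ) : ρ.E k 0 = 0 := by
  simp only [E, map_zero, smul_zero, finsum_zero]

theorem E_zero_left (w : W) : ρ.E 0 w = ρ.d (-1) w := by
  rw [E, finsum_eq_single _ 0 fun i hi => by rw [Int.cast_zero, zero_pow hi, zero_div, zero_smul]]
  simp

/-- The component of the action of `d_k` on `L(W, λ, a, b)` from degree `j` to degree `k + j`. -/
noncomputable def Lcomp (lam a b : ℂ) (k j : ℤ) (w : W) : W :=
  lam ^ k • ρ.E k w - ρ.d (-1) w + (a + (k : ℂ) * b + (j : ℂ)) • w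

theorem Lact_eq_gradedAct (lam a b : ℂ) : ρ.Lact lam a b = gradedAct (ρ.Lcomp lam a b) :=
  rfl

theorem Lcomp_zero_right (lam a b : ℂ) (k j : ℤ) : ρ.Lcomp lam a b k j 0 = 0 := by
  rw [Lcomp, E_zero_right, map_zero, smul_zero, smul_zero, sub_zero, add_zero]

theorem Lcomp_zero_left (lam a b : ℂ) (j : ℤ) (w : W) :
    ρ.Lcomp lam a b 0 j w = (a + (j : ℂ)) • w := by
  rw [Lcomp, E_zero_left, zpow_zero, one_smul, sub_self, zero_add, Int.cast_zero, zero_mul,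
    add_zero]

variable {ρ} {w₀ : W} {b' : ℂ}

theorem IsHW.d_highestWeight (hw : ρ.IsHW w₀ b') (i : ℕ) :
    ρ.d ((i : ℤ) - 1) w₀ =
      (-1 : ℂ) ^ i •
        ρ.ofPoly w₀ (X * derivative^[i] 1 - ((i : ℂ) * b') • derivative^[i - 1] 1) := by
  match i with
  | 0 => simp [ofPoly_apply]
  | 1 => simp [ofPoly_one, hw.2.1]
  | n + 2 =>
    have hd : ρ.d (((n + 2 : ℕ) : ℤ) - 1) w₀ = 0 := hw.2.2 _ (by lia)
    rw [hd]
    simp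

theorem IsHW.d_ofPoly (hw : ρ.IsHW w₀ b') (i : ℕ) (f : ℂ[X]) :
    ρ.d ((i : ℤ) - 1) (ρ.ofPoly w₀ f) =
      (-1 : ℂ) ^ i •
        ρ.ofPoly w₀ (X * derivative^[i] f - ((i : ℂ) * b') • derivative^[i - 1] f) := by
  induction f using Polynomial.induction_on generalizing i with
  | C c =>
    rw [← mul_one (C c), ← smul_eq_C_mul, map_smul, map_smul, ofPoly_one, hw.d_highestWeight,
      iterate_derivative_smul, iterate_derivative_smul, mul_smul_comm, smul_comm _ c, ← smul_sub,
      map_smul, smul_comm c]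
  | add f g hf hg =>
    rw [map_add, map_add, hf, hg, ← smul_add, ← map_add, iterate_map_add, iterate_map_add]
    congr 2
    rw [mul_add, smul_add, add_sub_add_comm]
  | monomial n c ih =>
    rw [show C c * X ^ (n + 1) = X * (C c * X ^ n) by ring, ofPoly_X_mul]
    generalize C c * X ^ n = f at ih ⊢
    match i with
    | 0 => simp [ofPoly_X_mul]
    | i + 1 =>
      have hstep := ih (i + 1)
      rw [Nat.cast_succ, add_sub_cancel_right, Nat.add_sub_cancel] at hstep
      rw [Nat.cast_succ, add_sub_cancel_right, Nat.add_sub_cancel, d_d_neg_one _ (by lia), hstep,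
        ih i, mul_comm X f, iterate_derivative_mul_X, iterate_derivative_mul_X,
        Nat.add_sub_cancel, ← map_smul, ← ofPoly_X_mul, ← map_smul, ← map_smul, ← map_smul,
        ← map_sub]
      congr 1
      simp only [smul_eq_C_mul, nsmul_eq_mul]
      push_cast
      simp only [map_mul, map_add, map_natCast, map_one, map_pow, map_neg]
      ring

theorem IsHW.invariant_range_ofPoly (hw : ρ.IsHW w₀ b') :
    ρ.Invariant (LinearMap.range (ρ.ofPoly w₀)) := by
  rintro i hi _ ⟨f, rfl⟩
  obtain ⟨n, rfl⟩ : ∃ n : ℕ, i = (n : ℤ) - 1 := ⟨(i + 1).toNat, by lia⟩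
  rw [hw.d_ofPoly, ← map_smul]
  exact LinearMap.mem_range_self _ _

theorem IsHW.surjective_ofPoly (hw : ρ.IsHW w₀ b') (hs : ρ.IsSimple) :
    Function.Surjective (ρ.ofPoly w₀) := by
  rw [← LinearMap.range_eq_top]
  refine (hs.2 _ hw.invariant_range_ofPoly).resolve_left fun hbot => hw.1 ?_
  rw [← Submodule.mem_bot ℂ, ← hbot]
  exact ⟨1, ofPoly_one _ _⟩

/-- `d_{deg f}` sends `f(d_{-1}) w₀` to a nonzero multiple of `w₀`. -/
theorem IsHW.injective_ofPoly (hw : ρ.IsHW w₀ b') (hb : b' ≠ 0) :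
    Function.Injective (ρ.ofPoly w₀) := by
  rw [injective_iff_map_eq_zero]
  intro f hf
  by_contra hf0
  have hd := hw.d_ofPoly (f.natDegree + 1) f
  rw [hf, map_zero, Nat.add_sub_cancel, iterate_derivative_eq_zero f.natDegree.lt_succ_self,
    iterate_derivative_natDegree, mul_zero, zero_sub, ← mul_one (C _), ← smul_eq_C_mul, smul_smul,
    map_neg, map_smul, ofPoly_one] at hd
  have hne : ((f.natDegree + 1 : ℕ) * b' * (f.natDegree ! * f.leadingCoeff) : ℂ) ≠ 0 :=
    mul_ne_zero (mul_ne_zero (Nat.cast_ne_zero.mpr f.natDegree.succ_ne_zero) hb)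
      (mul_ne_zero (Nat.cast_ne_zero.mpr f.natDegree.factorial_ne_zero)
        (leadingCoeff_ne_zero.mpr hf0))
  exact smul_ne_zero (pow_ne_zero _ (neg_ne_zero.mpr one_ne_zero))
    (neg_ne_zero.mpr (smul_ne_zero hne hw.1)) hd.symm

theorem IsHW.isVerma (hw : ρ.IsHW w₀ b') (hb : b' ≠ 0) (hs : ρ.IsSimple) : ρ.IsVerma w₀ b' :=
  ⟨hw.2.1, hw.2.2,
    ρ.bijective_ofPoly_iff.mp ⟨hw.injective_ofPoly hb, hw.surjective_ofPoly hs⟩⟩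

theorem IsVerma.isHW (hv : ρ.IsVerma w₀ b') : ρ.IsHW w₀ b' := by
  refine ⟨fun h0 => one_ne_zero (α := ℂ[X]) ?_, hv.1, hv.2.1⟩
  apply (ρ.bijective_ofPoly_iff.mpr hv.2.2).injective
  rw [ofPoly_one, map_zero, h0]

theorem IsHW.E_ofPoly (hw : ρ.IsHW w₀ b') (k : ℤ) (f : ℂ[X]) :
    ρ.E k (ρ.ofPoly w₀ f) = ρ.ofPoly w₀ ((X + C (k * b')) * f.comp (X - C (k : ℂ))) := by
  have hterm (i : ℕ) : ((k : ℂ) ^ i / (i ! : ℂ)) • ρ.d ((i : ℤ) - 1) (ρ.ofPoly w₀ f) =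
      ρ.ofPoly w₀ (((-k : ℂ) ^ i / (i ! : ℂ)) •
        (X * derivative^[i] f - ((i : ℂ) * b') • derivative^[i - 1] f)) := by
    rw [hw.d_ofPoly, smul_smul, map_smul, neg_pow (k : ℂ), mul_comm ((-1 : ℂ) ^ i),
      div_mul_eq_mul_div]
  have hzero (i : ℕ) (hi : f.natDegree + 2 ≤ i) :
      ((k : ℂ) ^ i / (i ! : ℂ)) • ρ.d ((i : ℤ) - 1) (ρ.ofPoly w₀ f) = 0 := by
    rw [hterm, iterate_derivative_eq_zero (by lia), iterate_derivative_eq_zero (by lia),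
      mul_zero, smul_zero, sub_zero, smul_zero, map_zero]
  rw [E, finsum_eq_finsetSum_of_support_subset (s := Finset.range (f.natDegree + 2)) _ fun i hi =>
      Finset.mem_coe.mpr (Finset.mem_range.mpr (not_le.mp fun h => hi (hzero i h))),
    Finset.sum_congr rfl fun i _ => hterm i, ← map_sum,
    sum_smul_X_mul_iterate_derivative_sub f _ b' (Nat.lt_succ_self _), neg_mul, C_neg,
    sub_neg_eq_add, C_neg, ← sub_eq_add_neg]

theorem IsHW.Lcomp_ofPoly {γ : ℂ} (hw : ρ.IsHW w₀ (-γ)) (lam a β : ℂ) (k j : ℤ) (f : ℂ[X]) :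
    ρ.Lcomp lam a β k j (ρ.ofPoly w₀ f) = ρ.ofPoly w₀ (polyLact lam a β γ k j f) := by
  rw [Lcomp, hw.E_ofPoly, ← ofPoly_X_mul, ← map_smul, ← map_smul, ← map_sub, ← map_add, polyLact,
    mul_neg, C_neg, ← sub_eq_add_neg, smul_eq_C_mul (a + k * β + j)]
  congr 1
  ring

theorem IsVerma.actSimple_Lact_iff {γ : ℂ} (hv : ρ.IsVerma w₀ (-γ)) {lam : ℂ} (hlam : lam ≠ 0)
    (a β : ℂ) :
    ActSimple (ρ.Lact lam a β) ↔ lam ≠ 1 ∧ γ ≠ 0 ∧ β ≠ 1 ∧ (lam = -1 → β ≠ 1 - γ) := by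
  have hdeg : Function.Injective fun j : ℤ => a + (j : ℂ) :=
    (add_right_injective a).comp Int.cast_injective
  rw [Lact_eq_gradedAct,
    actSimple_gradedAct_iff (ρ.Lcomp_zero_right lam a β) (ρ.Lcomp_zero_left lam a β) hdeg,
    ← gradedSimple_polyLact_iff hlam a β γ]
  exact (gradedSimple_congr (.ofBijective _ (ρ.bijective_ofPoly_iff.mpr hv.2.2))
    fun k j f => (hv.isHW.Lcomp_ofPoly lam a β k j f).symm).symm

end WittRep

theorem stmt14 {W : Type*} [AddCommGroup W] [Module ℂ W] (ρ : WittRep W)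
    (hO : ρ.InO) (h b γ p : ℂ)
    (hcase : (γ ≠ 0 ∧ ρ.IsSimple ∧ ∃ w₀ : W, ρ.IsHW w₀ (-γ)) ∨
      (γ = 0 ∧ ∃ w₀ : W, ρ.IsVerma w₀ 0)) :
    ActSimple (ρ.Lact (Complex.exp h) b (γ + p)) ↔
      ((Complex.exp h ≠ 1 ∧ Complex.exp h ≠ -1 ∧ γ ≠ 0 ∧ γ ≠ 1 - p) ∨
       (Complex.exp h = -1 ∧ γ ≠ 0 ∧ γ ≠ 1 - p ∧ γ ≠ (1 - p) / 2)) := by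
  obtain ⟨w₀, hv⟩ : ∃ w₀ : W, ρ.IsVerma w₀ (-γ) := by
    rcases hcase with ⟨hγ, hs, w₀, hw⟩ | ⟨rfl, w₀, hv⟩
    · exact ⟨w₀, hw.isVerma (neg_ne_zero.mpr hγ) hs⟩
    · exact ⟨w₀, by rwa [neg_zero]⟩
  have hone : γ + p ≠ 1 ↔ γ ≠ 1 - p := eq_sub_iff_add_eq.symm.not
  have hreflect : γ + p ≠ 1 - γ ↔ γ ≠ (1 - p) / 2 := by
    rw [ne_eq, ne_eq, eq_div_iff two_ne_zero]
    exact not_congr ⟨fun e => by linear_combination e, fun e => by linear_combination e⟩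
  rw [hv.actSimple_Lact_iff (Complex.exp_ne_zero h), hone, hreflect]
  by_cases hlam : Complex.exp h = -1
  · have hlam_ne_one : Complex.exp h ≠ 1 := by rw [hlam]; norm_num
    tauto
  · tauto
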